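/- Let m ≥ 2 and 0 ≤ a ≤ m−2 be integers and q, x complex numbers with |q| < 1 and |x| < 1, and define H_m^{(a)}(x) as in the paper. Then H_m^{(a)}(x) = (qx;q)_∞ · Σ_{k₁,…,k_{m−1} ≥ 0} (q^{k₁²+⋯+k_{m−1}² + k_{a+1}+⋯+k_{m−1}} / (qx;q)_{k_{m−1}}) · x^{2(k₁+⋯+k_{m−1}) + k_{m−1}} · (∏_{i=1, i≠a}^{m−2} [k_{i+1} choose k_i]_q) · [k_{a+1}+1 choose k_a]_q + (1 − x) · Σ_{k₁,…,k_m ≥ 0} ((qx;q)_{k_m} − (qx;q)_∞) · x^{k_m} · (∏_{i=1}^{a−1} q^{k_i²} x^{2k_i} [k_{i+1} choose k_i]_q) · q^{k_a²} x^{2k_a} [k_{a+1}+1 choose k_a]_q · (∏_{i=a+1}^{m−1} q^{k_i²+k_i} x^{2k_i} [k_{i+1} choose k_i]_q), with the convention k₀ = 0 when a = 0; all series converge absolutely. -/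

import Mathlib

/-- The finite q-Pochhammer symbol `(x;q)_n = ∏_{i=1}^n (1 - x q^{i-1})`. -/
noncomputable def qPoch (q x : ℂ) (n : ℕ) : ℂ := ∏ i ∈ Finset.range n, (1 - x * q ^ i)

/-- The infinite q-Pochhammer symbol `(x;q)_∞ = ∏_{i=1}^∞ (1 - x q^{i-1})`. -/
noncomputable def qPochInf (q x : ℂ) : ℂ := ∏' i : ℕ, (1 - x * q ^ i)

/-- The Gaussian binomial coefficient `[n choose c]_q`. -/
noncomputable def qBinom (q : ℂ) (n c : ℕ) : ℂ :=
  if c ≤ n then qPoch q q n / (qPoch q q c * qPoch q q (n - c)) else 0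

/-- Extends a tuple `(k₁,…,k_m)` to all of `ℕ` by `0` (in particular `k₀ = 0`). -/
def Kfun (m : ℕ) (k : Fin m → ℕ) (i : ℕ) : ℕ :=
  if h : 1 ≤ i ∧ i ≤ m then k ⟨i - 1, by omega⟩ else 0

/-- The summand of the multiple series `H_m^{(a)}(x)`, with the convention `k₀ = 0`. -/
noncomputable def Hterm (q x : ℂ) (m a : ℕ) (k : Fin m → ℕ) : ℂ :=
  qPoch q x (Kfun m k m + 1) * x ^ (Kfun m k m) *
  (∏ i ∈ Finset.Ico 1 a,
    q ^ (Kfun m k i ^ 2) * x ^ (2 * Kfun m k i) * qBinom q (Kfun m k (i + 1)) (Kfun m k i)) *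
  (q ^ (Kfun m k a ^ 2) * x ^ (2 * Kfun m k a) *
    qBinom q (Kfun m k (a + 1) + 1) (Kfun m k a)) *
  (∏ i ∈ Finset.Ico (a + 1) m,
    q ^ (Kfun m k i ^ 2 + Kfun m k i) * x ^ (2 * Kfun m k i) *
      qBinom q (Kfun m k (i + 1)) (Kfun m k i))

/-- The summand of the first series on the right-hand side:
`q^{k₁²+⋯+k_{m-1}²+k_{a+1}+⋯+k_{m-1}} / (qx;q)_{k_{m-1}} · x^{2(k₁+⋯+k_{m-1})+k_{m-1}}
 · (∏_{i=1,i≠a}^{m-2} [k_{i+1},k_i]) · [k_{a+1}+1,k_a]`, with `k₀ = 0`. -/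
noncomputable def AGterm (q x : ℂ) (m a : ℕ) (k : Fin (m - 1) → ℕ) : ℂ :=
  q ^ (∑ i ∈ Finset.Ico 1 m, (Kfun (m - 1) k i) ^ 2 + ∑ i ∈ Finset.Ico (a + 1) m, Kfun (m - 1) k i)
    / qPoch q (q * x) (Kfun (m - 1) k (m - 1)) *
  x ^ (2 * ∑ i ∈ Finset.Ico 1 m, Kfun (m - 1) k i + Kfun (m - 1) k (m - 1)) *
  (∏ i ∈ (Finset.Ico 1 (m - 1)).erase a,
    qBinom q (Kfun (m - 1) k (i + 1)) (Kfun (m - 1) k i)) *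
  qBinom q (Kfun (m - 1) k (a + 1) + 1) (Kfun (m - 1) k a)

/-- The summand of the second series on the right-hand side: like `Hterm` but with
`(qx;q)_{k_m} − (qx;q)_∞` in place of `(x;q)_{k_m+1}`. -/
noncomputable def Hterm2 (q x : ℂ) (m a : ℕ) (k : Fin m → ℕ) : ℂ :=
  (qPoch q (q * x) (Kfun m k m) - qPochInf q (q * x)) * x ^ (Kfun m k m) *
  (∏ i ∈ Finset.Ico 1 a,
    q ^ (Kfun m k i ^ 2) * x ^ (2 * Kfun m k i) * qBinom q (Kfun m k (i + 1)) (Kfun m k i)) *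
  (q ^ (Kfun m k a ^ 2) * x ^ (2 * Kfun m k a) *
    qBinom q (Kfun m k (a + 1) + 1) (Kfun m k a)) *
  (∏ i ∈ Finset.Ico (a + 1) m,
    q ^ (Kfun m k i ^ 2 + Kfun m k i) * x ^ (2 * Kfun m k i) *
      qBinom q (Kfun m k (i + 1)) (Kfun m k i))

/-!
In `H_m^{(a)}(x)` write `(x;q)_{k_m+1} = (1 - x) (qx;q)_∞ + (1 - x) ((qx;q)_{k_m} - (qx;q)_∞)`.
The second part is the second series on the right-hand side. In the first part the Pochhammer factor
no longer depends on `k_m`, which now occurs only in `x^{k_m} [k_m choose k_{m-1}]_q` because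
`a ≤ m - 2`, so the sum over `k_m` is evaluated by
`∑ n, x^n [n choose c]_q = x^c / (x;q)_{c+1}`.
Gaussian binomials with `|q| < 1` are uniformly bounded, so all terms are dominated by a multiple of
`|x|^(k₁ + k₂ + ⋯)`.
-/

section Products

variable {M : Type*} [CommMonoid M] {a n : ℕ}

lemma prod_erase_Ico_one (f : ℕ → M) (han : a < n) :
    ∏ i ∈ (Finset.Ico 1 n).erase a, f i =
      (∏ i ∈ Finset.Ico 1 a, f i) * ∏ i ∈ Finset.Ico (a + 1) n, f i := by
  have hdisj : Disjoint (Finset.Ico 1 a) (Finset.Ico (a + 1) n) :=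
    Finset.disjoint_left.mpr fun i => by simp only [Finset.mem_Ico]; omega
  rw [← Finset.prod_union hdisj]
  congr 1
  ext i
  simp only [Finset.mem_erase, Finset.mem_Ico, Finset.mem_union]
  omega

lemma prod_Ico_one_eq_mul_mul (f : ℕ → M) (hf : f 0 = 1) (han : a < n) :
    ∏ i ∈ Finset.Ico 1 n, f i =
      (∏ i ∈ Finset.Ico 1 a, f i) * f a * ∏ i ∈ Finset.Ico (a + 1) n, f i := by
  rcases Nat.eq_zero_or_pos a with rfl | ha
  · simp [hf]
  · rw [mul_right_comm, ← prod_erase_Ico_one f han,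
      Finset.prod_erase_mul _ _ (Finset.mem_Ico.mpr ⟨ha, han⟩)]

end Products

lemma summable_prod_pi {ι : Type*} [Fintype ι] {κ : ι → Type*} {f : ∀ i, κ i → ℝ}
    (hf₀ : ∀ i j, 0 ≤ f i j) (hf : ∀ i, Summable (f i)) :
    Summable fun k : ∀ i, κ i => ∏ i, f i (k i) := by
  classical
  refine summable_of_sum_le (c := ∏ i, ∑' j, f i j)
    (fun k => Finset.prod_nonneg fun i _ => hf₀ i (k i)) fun s => ?_
  have hs : s ⊆ Fintype.piFinset fun i => s.image (· i) := fun k hk =>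
    Fintype.mem_piFinset.mpr fun i => Finset.mem_image_of_mem (· i) hk
  calc ∑ k ∈ s, ∏ i, f i (k i)
      ≤ ∑ k ∈ Fintype.piFinset fun i => s.image (· i), ∏ i, f i (k i) :=
        Finset.sum_le_sum_of_subset_of_nonneg hs fun k _ _ =>
          Finset.prod_nonneg fun i _ => hf₀ i (k i)
    _ = ∏ i, ∑ j ∈ s.image (· i), f i j := (Finset.prod_univ_sum _ _).symm
    _ ≤ ∏ i, ∑' j, f i j :=
        Finset.prod_le_prod (fun i _ => Finset.sum_nonneg fun j _ => hf₀ i j)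
          fun i _ => (hf i).sum_le_tsum _ fun j _ => hf₀ i j

section QPochhammer

variable {q x : ℂ}

lemma qPoch_zero (q x : ℂ) : qPoch q x 0 = 1 := Finset.prod_range_zero _

lemma qPoch_succ (q x : ℂ) (n : ℕ) : qPoch q x (n + 1) = qPoch q x n * (1 - x * q ^ n) :=
  Finset.prod_range_succ _ n

lemma qPoch_succ' (q x : ℂ) (n : ℕ) : qPoch q x (n + 1) = (1 - x) * qPoch q (q * x) n := by
  simp only [qPoch, Finset.prod_range_succ', pow_zero, mul_one, pow_succ]
  rw [mul_comm]
  congr! 3 with i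
  ring

lemma one_sub_mul_pow_ne_zero (hq : ‖q‖ ≤ 1) (hx : ‖x‖ < 1) (n : ℕ) : 1 - x * q ^ n ≠ 0 := by
  have hlt : ‖x * q ^ n‖ < 1 := by
    rw [norm_mul, norm_pow]
    exact mul_lt_one_of_nonneg_of_lt_one_left (norm_nonneg x) hx (pow_le_one₀ (norm_nonneg q) hq)
  intro h
  rw [← sub_eq_zero.mp h, norm_one] at hlt
  exact lt_irrefl _ hlt

lemma qPoch_ne_zero (hq : ‖q‖ ≤ 1) (hx : ‖x‖ < 1) (n : ℕ) : qPoch q x n ≠ 0 :=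
  Finset.prod_ne_zero_iff.mpr fun i _ => one_sub_mul_pow_ne_zero hq hx i

lemma summable_norm_neg_mul_pow (hq : ‖q‖ < 1) (x : ℂ) : Summable fun i : ℕ => ‖-(x * q ^ i)‖ := by
  simpa only [norm_neg, norm_mul, norm_pow] using
    (summable_geometric_of_lt_one (norm_nonneg q) hq).mul_left ‖x‖

lemma tendsto_qPoch (hq : ‖q‖ < 1) (x : ℂ) :
    Filter.Tendsto (qPoch q x) Filter.atTop (nhds (qPochInf q x)) := by
  have hmul := multipliable_one_add_of_summable (summable_norm_neg_mul_pow hq x)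
  simp only [← sub_eq_add_neg] at hmul
  exact hmul.tendsto_prod_tprod_nat

lemma qPochInf_ne_zero (hq : ‖q‖ < 1) (hx : ∀ i : ℕ, 1 - x * q ^ i ≠ 0) : qPochInf q x ≠ 0 := by
  have hne := tprod_one_add_ne_zero_of_summable (f := fun i : ℕ => -(x * q ^ i))
    (fun i => by simpa only [← sub_eq_add_neg] using hx i)
    (summable_norm_neg_mul_pow hq x)
  simpa only [qPochInf, ← sub_eq_add_neg] using hne

lemma exists_norm_qPoch_le (hq : ‖q‖ < 1) (x : ℂ) : ∃ C, ∀ n, ‖qPoch q x n‖ ≤ C := by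
  obtain ⟨C, hC⟩ := (tendsto_qPoch hq x).norm.bddAbove_range
  exact ⟨C, fun n => hC ⟨n, rfl⟩⟩

lemma exists_norm_inv_qPoch_le (hq : ‖q‖ < 1) (hx : ∀ i : ℕ, 1 - x * q ^ i ≠ 0) :
    ∃ C, ∀ n, ‖(qPoch q x n)⁻¹‖ ≤ C := by
  obtain ⟨C, hC⟩ := ((tendsto_qPoch hq x).inv₀ (qPochInf_ne_zero hq hx)).norm.bddAbove_range
  exact ⟨C, fun n => hC ⟨n, rfl⟩⟩

end QPochhammer

section QBinomial

variable {q x : ℂ}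

lemma qBinom_eq_zero_of_lt (q : ℂ) {n c : ℕ} (h : n < c) : qBinom q n c = 0 := if_neg h.not_ge

lemma qBinom_add_left (q : ℂ) (c d : ℕ) :
    qBinom q (c + d) c = qPoch q q (c + d) / (qPoch q q c * qPoch q q d) := by
  rw [qBinom, if_pos (Nat.le_add_right c d), Nat.add_sub_cancel_left]

lemma qBinom_zero_right (hq : ∀ n, qPoch q q n ≠ 0) (n : ℕ) : qBinom q n 0 = 1 := by
  simp [qBinom, qPoch_zero, hq n]

lemma qBinom_self (hq : ∀ n, qPoch q q n ≠ 0) (n : ℕ) : qBinom q n n = 1 := by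
  simp [qBinom, qPoch_zero, hq n]

lemma qBinom_succ_succ (hq : ∀ n, qPoch q q n ≠ 0) (n c : ℕ) :
    qBinom q (n + 1) (c + 1) = qBinom q n c + q ^ (c + 1) * qBinom q n (c + 1) := by
  rcases lt_trichotomy n c with hlt | rfl | hgt
  · simp [qBinom_eq_zero_of_lt q hlt, qBinom_eq_zero_of_lt q (Nat.succ_lt_succ hlt),
      qBinom_eq_zero_of_lt q (Nat.lt_succ_of_lt hlt)]
  · simp [qBinom_self hq, qBinom_eq_zero_of_lt q (Nat.lt_succ_self n)]
  · obtain ⟨d, rfl⟩ := Nat.exists_eq_add_of_lt hgt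
    have hfactor (i : ℕ) : 1 - q * q ^ i ≠ 0 :=
      right_ne_zero_of_mul (qPoch_succ q q i ▸ hq (i + 1))
    have hc := hfactor c
    have hd := hfactor d
    have hc' := hq c
    have hd' := hq d
    rw [show c + d + 1 + 1 = (c + 1) + (d + 1) by ring, qBinom_add_left,
      show c + 1 + (d + 1) = c + d + 1 + 1 by ring, show c + d + 1 = c + (d + 1) by ring,
      qBinom_add_left, show c + (d + 1) = c + 1 + d by ring, qBinom_add_left,
      qPoch_succ q q (c + 1 + d), qPoch_succ q q c, qPoch_succ q q d]
    field_simp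
    ring

lemma exists_norm_qBinom_le (hq : ‖q‖ < 1) : ∃ B, ∀ n c, ‖qBinom q n c‖ ≤ B := by
  obtain ⟨C, hC⟩ := exists_norm_qPoch_le hq q
  obtain ⟨D, hD⟩ := exists_norm_inv_qPoch_le hq (one_sub_mul_pow_ne_zero hq.le hq)
  have hC₀ : 0 ≤ C := (norm_nonneg _).trans (hC 0)
  have hD₀ : 0 ≤ D := (norm_nonneg _).trans (hD 0)
  refine ⟨C * (D * D), fun n c => ?_⟩
  rw [qBinom]
  split_ifs with h
  · rw [div_eq_mul_inv, mul_inv, norm_mul, norm_mul]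
    gcongr
    exacts [hC n, hD c, hD (n - c)]
  · rw [norm_zero]
    positivity

lemma summable_pow_mul_qBinom (hq : ‖q‖ < 1) (hx : ‖x‖ < 1) (c : ℕ) :
    Summable fun n : ℕ => x ^ n * qBinom q n c := by
  obtain ⟨B, hB⟩ := exists_norm_qBinom_le hq
  refine .of_norm_bounded ((summable_geometric_of_lt_one (norm_nonneg x) hx).mul_right B) ?_
  intro n
  rw [norm_mul, norm_pow]
  gcongr
  exact hB n c

lemma tsum_pow_mul_qBinom_succ (hq : ‖q‖ < 1) (hx : ‖x‖ < 1) (c : ℕ) :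
    (1 - x * q ^ (c + 1)) * ∑' n : ℕ, x ^ n * qBinom q n (c + 1) =
      x * ∑' n : ℕ, x ^ n * qBinom q n c := by
  have hsum := summable_pow_mul_qBinom hq hx
  have hrec : ∑' n : ℕ, x ^ n * qBinom q n (c + 1) =
      x * ∑' n : ℕ, x ^ n * qBinom q n c +
        x * q ^ (c + 1) * ∑' n : ℕ, x ^ n * qBinom q n (c + 1) := by
    rw [← tsum_mul_left, ← tsum_mul_left,
      ← ((hsum c).mul_left _).tsum_add ((hsum (c + 1)).mul_left _), (hsum (c + 1)).tsum_eq_zero_add,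
      qBinom_eq_zero_of_lt q c.succ_pos, mul_zero, zero_add]
    refine tsum_congr fun n => ?_
    rw [qBinom_succ_succ (qPoch_ne_zero hq.le hq)]
    ring
  linear_combination hrec

lemma hasSum_pow_mul_qBinom (hq : ‖q‖ < 1) (hx : ‖x‖ < 1) (c : ℕ) :
    HasSum (fun n : ℕ => x ^ n * qBinom q n c) (x ^ c / qPoch q x (c + 1)) := by
  refine (summable_pow_mul_qBinom hq hx c).hasSum_iff.mpr ?_
  induction c with
  | zero =>
    simp [qBinom_zero_right (qPoch_ne_zero hq.le hq), tsum_geometric_of_norm_lt_one hx,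
      qPoch_succ, qPoch_zero]
  | succ c ih =>
    have hfactor := one_sub_mul_pow_ne_zero hq.le hx (c + 1)
    have hpoch := qPoch_ne_zero hq.le hx (c + 1)
    refine mul_left_cancel₀ hfactor ?_
    rw [tsum_pow_mul_qBinom_succ hq hx, ih, qPoch_succ q x (c + 1)]
    field_simp
    ring

lemma hasSum_one_sub_mul_pow_mul_qBinom (hq : ‖q‖ < 1) (hx : ‖x‖ < 1) (c : ℕ) :
    HasSum (fun n : ℕ => (1 - x) * (x ^ n * qBinom q n c)) (x ^ c / qPoch q (q * x) c) := by
  have hx₁ : 1 - x ≠ 0 := by simpa using one_sub_mul_pow_ne_zero hq.le hx 0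
  have h := (hasSum_pow_mul_qBinom hq hx c).mul_left (1 - x)
  rwa [qPoch_succ', ← mul_div_assoc, mul_div_mul_left _ _ hx₁] at h

end QBinomial

namespace Kfun

variable {m : ℕ}

lemma apply_zero (k : Fin m → ℕ) : Kfun m k 0 = 0 := by simp [Kfun]

lemma apply_succ (k : Fin m → ℕ) (i : Fin m) : Kfun m k (i + 1) = k i := by
  simp [Kfun]

lemma sum_Ico (k : Fin m → ℕ) : ∑ i ∈ Finset.Ico 1 (m + 1), Kfun m k i = ∑ i, k i := by
  simp_rw [Finset.sum_Ico_eq_sum_range, Nat.add_sub_cancel, Finset.sum_range, add_comm 1,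
    apply_succ]

lemma snoc_of_le (k : Fin m → ℕ) (n : ℕ) {i : ℕ} (hi : i ≤ m) :
    Kfun (m + 1) (Fin.snoc (α := fun _ => ℕ) k n) i = Kfun m k i := by
  cases i with
  | zero => simp only [apply_zero]
  | succ i =>
    have hcast := apply_succ (Fin.snoc (α := fun _ => ℕ) k n) (Fin.castSucc ⟨i, hi⟩)
    rw [Fin.snoc_castSucc] at hcast
    exact hcast.trans (apply_succ k ⟨i, hi⟩).symm

lemma snoc_last (k : Fin m → ℕ) (n : ℕ) :
    Kfun (m + 1) (Fin.snoc (α := fun _ => ℕ) k n) (m + 1) = n := by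
  simpa only [Fin.val_last, Fin.snoc_last] using
    apply_succ (Fin.snoc (α := fun _ => ℕ) k n) (Fin.last m)

end Kfun

/-- The summand of the first series on the right-hand side for `m = M + 1`, without its factor
`x^{k_M} / (qx;q)_{k_M}`. It is defined for a sequence `K`, so that tuples of
different lengths can be compared. -/
noncomputable def AGfactor (q x : ℂ) (a M : ℕ) (K : ℕ → ℕ) : ℂ :=
  q ^ (∑ i ∈ Finset.Ico 1 (M + 1), K i ^ 2 + ∑ i ∈ Finset.Ico (a + 1) (M + 1), K i) *
  x ^ (2 * ∑ i ∈ Finset.Ico 1 (M + 1), K i) *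
  (∏ i ∈ (Finset.Ico 1 M).erase a, qBinom q (K (i + 1)) (K i)) *
  qBinom q (K (a + 1) + 1) (K a)

/-- The summand of `H_{M+1}^{(a)}(x)` without its Pochhammer factor `(x;q)_{k_{M+1}+1}`. -/
noncomputable def Hkernel (q x : ℂ) (a M : ℕ) (k : Fin (M + 1) → ℕ) : ℂ :=
  AGfactor q x a M (Kfun (M + 1) k) *
    (x ^ Kfun (M + 1) k (M + 1) * qBinom q (Kfun (M + 1) k (M + 1)) (Kfun (M + 1) k M))

section Summands

variable {q x : ℂ} {a M : ℕ}

lemma AGfactor_congr (haM : a < M) {K L : ℕ → ℕ} (hKL : ∀ i ≤ M, K i = L i) :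
    AGfactor q x a M K = AGfactor q x a M L := by
  have hsum (b : ℕ) (f : ℕ → ℕ) :
      ∑ i ∈ Finset.Ico b (M + 1), f (K i) = ∑ i ∈ Finset.Ico b (M + 1), f (L i) :=
    Finset.sum_congr rfl fun i hi => by rw [hKL i (Nat.le_of_lt_succ (Finset.mem_Ico.mp hi).2)]
  have hprod : ∏ i ∈ (Finset.Ico 1 M).erase a, qBinom q (K (i + 1)) (K i) =
      ∏ i ∈ (Finset.Ico 1 M).erase a, qBinom q (L (i + 1)) (L i) := by
    refine Finset.prod_congr rfl fun i hi => ?_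
    have hiM : i < M := (Finset.mem_Ico.mp (Finset.mem_of_mem_erase hi)).2
    rw [hKL i hiM.le, hKL (i + 1) hiM]
  rw [AGfactor, AGfactor, hsum 1 fun j => j ^ 2, hsum (a + 1) fun j => j, hsum 1 fun j => j,
    hprod, hKL a haM.le, hKL (a + 1) haM]

lemma AGfactor_mul_qBinom (haM : a < M) {K : ℕ → ℕ} (hK : K 0 = 0) :
    AGfactor q x a M K * qBinom q (K (M + 1)) (K M) =
      (∏ i ∈ Finset.Ico 1 a, q ^ (K i ^ 2) * x ^ (2 * K i) * qBinom q (K (i + 1)) (K i)) *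
      (q ^ (K a ^ 2) * x ^ (2 * K a) * qBinom q (K (a + 1) + 1) (K a)) *
      ∏ i ∈ Finset.Ico (a + 1) (M + 1),
        q ^ (K i ^ 2 + K i) * x ^ (2 * K i) * qBinom q (K (i + 1)) (K i) := by
  have haM' : a < M + 1 := haM.trans (Nat.lt_succ_self M)
  rw [AGfactor, prod_erase_Ico_one _ haM, pow_add, Finset.mul_sum]
  simp only [← Finset.prod_pow_eq_pow_sum]
  rw [prod_Ico_one_eq_mul_mul (fun i => q ^ K i ^ 2) (by simp [hK]) haM',
    prod_Ico_one_eq_mul_mul (fun i => x ^ (2 * K i)) (by simp [hK]) haM']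
  simp only [pow_add, Finset.prod_mul_distrib]
  rw [Finset.prod_Ico_succ_top haM fun i => qBinom q (K (i + 1)) (K i)]
  ring

lemma exists_norm_AGfactor_le (hq : ‖q‖ < 1) (hx : ‖x‖ ≤ 1) (a M : ℕ) :
    ∃ C, 0 ≤ C ∧
      ∀ K : ℕ → ℕ, ‖AGfactor q x a M K‖ ≤ C * ‖x‖ ^ ∑ i ∈ Finset.Ico 1 (M + 1), K i := by
  obtain ⟨B, hB⟩ := exists_norm_qBinom_le hq
  have hB₀ : 0 ≤ B := (norm_nonneg _).trans (hB 0 0)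
  refine ⟨B ^ ((Finset.Ico 1 M).erase a).card * B, by positivity, fun K => ?_⟩
  set S := ∑ i ∈ Finset.Ico 1 (M + 1), K i
  have hqpow (e : ℕ) : ‖q ^ e‖ ≤ 1 := norm_pow q e ▸ pow_le_one₀ (norm_nonneg q) hq.le
  have hxpow : ‖x ^ (2 * S)‖ ≤ ‖x‖ ^ S := by
    rw [norm_pow]
    exact pow_le_pow_of_le_one (norm_nonneg x) hx (Nat.le_mul_of_pos_left S two_pos)
  have hprod : ‖∏ i ∈ (Finset.Ico 1 M).erase a, qBinom q (K (i + 1)) (K i)‖ ≤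
      B ^ ((Finset.Ico 1 M).erase a).card := by
    rw [norm_prod, ← Finset.prod_const]
    exact Finset.prod_le_prod (fun _ _ => norm_nonneg _) fun _ _ => hB _ _
  rw [AGfactor, norm_mul, norm_mul, norm_mul]
  calc _ ≤ 1 * ‖x‖ ^ S * B ^ ((Finset.Ico 1 M).erase a).card * B := by
        gcongr
        exacts [hqpow _, hB _ _]
    _ = _ := by ring

lemma AGterm_succ (q x : ℂ) (a M : ℕ) (k : Fin M → ℕ) :
    AGterm q x (M + 1) a k =
      AGfactor q x a M (Kfun M k) * (x ^ Kfun M k M / qPoch q (q * x) (Kfun M k M)) := by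
  dsimp only [AGterm, AGfactor, Nat.add_one_sub_one]
  rw [pow_add x]
  ring

lemma Hterm_succ (haM : a < M) (k : Fin (M + 1) → ℕ) :
    Hterm q x (M + 1) a k = qPoch q x (Kfun (M + 1) k (M + 1) + 1) * Hkernel q x a M k := by
  rw [Hterm, Hkernel]
  linear_combination -qPoch q x (Kfun (M + 1) k (M + 1) + 1) * x ^ Kfun (M + 1) k (M + 1) *
    AGfactor_mul_qBinom (q := q) (x := x) haM (Kfun.apply_zero k)

lemma Hterm2_succ (haM : a < M) (k : Fin (M + 1) → ℕ) :
    Hterm2 q x (M + 1) a k =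
      (qPoch q (q * x) (Kfun (M + 1) k (M + 1)) - qPochInf q (q * x)) * Hkernel q x a M k := by
  rw [Hterm2, Hkernel]
  linear_combination -(qPoch q (q * x) (Kfun (M + 1) k (M + 1)) - qPochInf q (q * x)) *
    x ^ Kfun (M + 1) k (M + 1) *
    AGfactor_mul_qBinom (q := q) (x := x) haM (Kfun.apply_zero k)

lemma Hterm_succ_eq_add (haM : a < M) (k : Fin (M + 1) → ℕ) :
    Hterm q x (M + 1) a k =
      qPochInf q (q * x) * ((1 - x) * Hkernel q x a M k) +
        (1 - x) * Hterm2 q x (M + 1) a k := by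
  rw [Hterm_succ haM, Hterm2_succ haM, qPoch_succ']
  ring

lemma Hkernel_snoc (haM : a < M) (k : Fin M → ℕ) (n : ℕ) :
    Hkernel q x a M (Fin.snoc (α := fun _ => ℕ) k n) =
      AGfactor q x a M (Kfun M k) * (x ^ n * qBinom q n (Kfun M k M)) := by
  rw [Hkernel, Kfun.snoc_last, Kfun.snoc_of_le k n le_rfl,
    AGfactor_congr haM fun i hi => Kfun.snoc_of_le k n hi]

end Summands

section Summation

variable {q x : ℂ} {a M : ℕ}

lemma summable_Hkernel (hq : ‖q‖ < 1) (hx : ‖x‖ < 1) (haM : a < M) :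
    Summable (Hkernel q x a M) := by
  obtain ⟨B, hB⟩ := exists_norm_qBinom_le hq
  have hB₀ : 0 ≤ B := (norm_nonneg _).trans (hB 0 0)
  obtain ⟨C, hC₀, hC⟩ := exists_norm_AGfactor_le hq hx.le a M
  have hgeom := summable_geometric_of_lt_one (norm_nonneg x) hx
  have hbound : Summable fun p : ℕ × (Fin M → ℕ) =>
      (‖x‖ ^ p.1 * B) * (C * ∏ i, ‖x‖ ^ p.2 i) :=
    (hgeom.mul_right B).mul_of_nonneg
      ((summable_prod_pi (fun _ _ => by positivity) fun _ => hgeom).mul_left C)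
      (fun n => by positivity) fun k => by positivity
  rw [← (Fin.snocEquiv fun _ => ℕ).summable_iff]
  refine .of_norm_bounded hbound fun ⟨n, k⟩ => ?_
  have hAG := hC (Kfun M k)
  rw [Kfun.sum_Ico, ← Finset.prod_pow_eq_pow_sum] at hAG
  calc ‖Hkernel q x a M (Fin.snoc (α := fun _ => ℕ) k n)‖
      = ‖x‖ ^ n * ‖qBinom q n (Kfun M k M)‖ * ‖AGfactor q x a M (Kfun M k)‖ := by
        rw [Hkernel_snoc haM, norm_mul, norm_mul, norm_pow, mul_comm]
    _ ≤ (‖x‖ ^ n * B) * (C * ∏ i, ‖x‖ ^ k i) := by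
        gcongr
        exact hB _ _

lemma hasSum_AGterm (hq : ‖q‖ < 1) (hx : ‖x‖ < 1) (haM : a < M) :
    HasSum (AGterm q x (M + 1) a) (∑' k, (1 - x) * Hkernel q x a M k) := by
  let e : (Fin M → ℕ) × ℕ ≃ (Fin (M + 1) → ℕ) :=
    (Equiv.prodComm _ _).trans (Fin.snocEquiv fun _ => ℕ)
  have htotal := e.hasSum_iff.mpr ((summable_Hkernel hq hx haM).mul_left (1 - x)).hasSum
  refine htotal.prod_fiberwise fun k => ?_
  rw [AGterm_succ]
  have hfiber := (hasSum_one_sub_mul_pow_mul_qBinom hq hx (Kfun M k M)).mul_left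
    (AGfactor q x a M (Kfun M k))
  refine hfiber.congr_fun fun n => ?_
  change (1 - x) * Hkernel q x a M (Fin.snoc (α := fun _ => ℕ) k n) = _
  rw [Hkernel_snoc haM]
  ring

lemma summable_Hterm2 (hq : ‖q‖ < 1) (hx : ‖x‖ < 1) (haM : a < M) :
    Summable (Hterm2 q x (M + 1) a) := by
  obtain ⟨C, hC⟩ := exists_norm_qPoch_le hq (q * x)
  refine .of_norm_bounded
    ((summable_Hkernel hq hx haM).norm.mul_left (C + ‖qPochInf q (q * x)‖)) fun k => ?_
  rw [Hterm2_succ haM, norm_mul]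
  gcongr
  exact norm_sub_le_of_le (hC _) le_rfl

end Summation

theorem stmt_11 (m a : ℕ) (hm : 2 ≤ m) (ha : a + 2 ≤ m) (q x : ℂ)
    (hq : ‖q‖ < 1) (hx : ‖x‖ < 1) :
    Summable (Hterm q x m a) ∧
    Summable (AGterm q x m a) ∧
    Summable (Hterm2 q x m a) ∧
    ∑' k : Fin m → ℕ, Hterm q x m a k
      = qPochInf q (q * x) * ∑' k : Fin (m - 1) → ℕ, AGterm q x m a k
        + (1 - x) * ∑' k : Fin m → ℕ, Hterm2 q x m a k := by
  obtain ⟨M, rfl⟩ : ∃ M, m = M + 1 := Nat.exists_eq_add_of_le' (one_le_two.trans hm)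
  have haM : a < M := by omega
  have hkernel := (summable_Hkernel hq hx haM).mul_left (1 - x)
  have hAG := hasSum_AGterm hq hx haM
  have hH2 := summable_Hterm2 hq hx haM
  have hH : HasSum (Hterm q x (M + 1) a) _ :=
    ((hkernel.hasSum.mul_left (qPochInf q (q * x))).add (hH2.hasSum.mul_left (1 - x))).congr_fun
      (Hterm_succ_eq_add haM)
  refine ⟨hH.summable, hAG.summable, hH2, ?_⟩
  rw [hH.tsum_eq, ← hAG.tsum_eq]
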